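/- arXiv:1805.09757 — 2 statements merged into one kernel-verified Lean document; each statement's English description precedes it below -/
import Mathlib

section
/- In a hidden Markov tree, the forward incoming message satisfies, for every node n and every label y_n ∈ {0,1}, f_n^i(y_n) = P(x_{subtree(n)}, y_n), i.e. the recursively defined message equals the marginal joint probability of the feature likelihood factors of all strict descendants of n (in the parent direction) together with the label y_n. -/
/-!
Writing the label constraint at `n` as an indicator weight, the marginal is a sum over all labelings
of a product of one factor per node. Nodes are eliminated from this sum one at a time, at both
ends of the tree.

Outside `tree n` there are no features, and this set is closed under passing to the child, so its
nodes can be removed starting from the root: no remaining factor but its own class factor involves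
the label of the node being removed, and a class factor sums to `1` (`sum_elim_pre`). Inside
`tree n`, which is closed under passing to parents, nodes are absorbed into messages starting from
the leaves: the labels of the parents of a node occur only in that node's class factor and in the
parents' messages, so summing over them is exactly the message recursion (`sum_elim_tree`).
When all nodes are processed, only the message at `n` remains. Both steps replace a local factor
by another with the same partial sums (`sum_mul_congr_of_partial`).
-/

open Finset

/-- A finite reverse tree: every node has at most one child (`child n = none` only
for the unique root), and the parent relation (`child k = some n` meaning `k` is a
parent of `n`) is acyclic. -/
structure RevTree (N : ℕ) where
  child : Fin N → Option (Fin N)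
  acyclic : ∀ n : Fin N, ¬ Relation.TransGen (fun a b => child a = some b) n n
  root : Fin N
  child_root : child root = none
  root_unique : ∀ n : Fin N, child n = none → n = root

namespace RevTree

variable {N : ℕ}

/-- The set of parents of a node. -/
def parents (T : RevTree N) (n : Fin N) : Finset (Fin N) :=
  Finset.univ.filter fun k => T.child k = some n

/-- A leaf is a node with no parents. -/
def IsLeaf (T : RevTree N) (n : Fin N) : Prop :=
  T.parents n = ∅

instance (T : RevTree N) (n : Fin N) : Decidable (T.IsLeaf n) :=
  inferInstanceAs (Decidable (T.parents n = ∅))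

open scoped Classical in
/-- `tree n`: all nodes from which `n` is reachable by following child edges,
including `n` itself. -/
noncomputable def tree (T : RevTree N) (n : Fin N) : Finset (Fin N) :=
  Finset.univ.filter fun m =>
    Relation.ReflTransGen (fun a b => T.child a = some b) m n

/-- `subtree n = tree n \ {n}`: the strict descendants (in the parent direction). -/
noncomputable def subtree (T : RevTree N) (n : Fin N) : Finset (Fin N) :=
  T.tree n \ {n}

/-- `pre n`: complement of `tree n`. -/
noncomputable def pre (T : RevTree N) (n : Fin N) : Finset (Fin N) :=
  Finset.univ \ T.tree n

/-- `passed n`: complement of `subtree n`. -/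
noncomputable def passed (T : RevTree N) (n : Fin N) : Finset (Fin N) :=
  Finset.univ \ T.subtree n

/-- The siblings of `n` with respect to its child `c`: the other parents of `c`. -/
def siblings (T : RevTree N) (n c : Fin N) : Finset (Fin N) :=
  T.parents c \ {n}

end RevTree

/-- Leaf class prior `P(y) = π^y (1-π)^(1-y)`. -/
noncomputable def leafPrior (π : ℝ) (y : Fin 2) : ℝ :=
  π ^ (y : ℕ) * (1 - π) ^ (1 - (y : ℕ))

/-- Class transition probability of a node with label `y` given the product `z`
of its parents' labels: `ρ^(yz) (1-ρ)^((1-y)z) 0^(y(1-z)) 1^((1-y)(1-z))`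
(note `(0:ℝ)^0 = 1`). -/
noncomputable def transProb (ρ : ℝ) (y z : ℕ) : ℝ :=
  ρ ^ (y * z) * (1 - ρ) ^ ((1 - y) * z) * (0 : ℝ) ^ (y * (1 - z)) *
    (1 : ℝ) ^ ((1 - y) * (1 - z))

/-- The class factor of node `n` in a full labeling `Y`: the leaf prior for leaves,
and the transition probability given the product of the parents' labels otherwise. -/
noncomputable def nodeFactor {N : ℕ} (T : RevTree N) (π ρ : ℝ) (Y : Fin N → Fin 2)
    (n : Fin N) : ℝ :=
  if T.IsLeaf n then leafPrior π (Y n)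
  else transProb ρ (Y n : ℕ) (∏ k ∈ T.parents n, (Y k : ℕ))

/-- The marginal `P(x_S, y_T)`: sum over all labelings agreeing with `σ` on `Tset`
of the product of the feature likelihoods over `S` times the product of all class
factors. -/
noncomputable def marginal {N : ℕ} (T : RevTree N) (π ρ : ℝ) (px : Fin N → Fin 2 → ℝ)
    (S Tset : Finset (Fin N)) (σ : Fin N → Fin 2) : ℝ :=
  ∑ Y ∈ Finset.univ.filter (fun Y : Fin N → Fin 2 => ∀ t ∈ Tset, Y t = σ t),
    (∏ m ∈ S, px m (Y m)) * ∏ m, nodeFactor T π ρ Y m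

/-- Assignments of binary labels to the nodes in `S` (encoded as functions on all
nodes that are `0` outside `S`, so each assignment to `S` occurs exactly once). -/
def assignments {N : ℕ} (S : Finset (Fin N)) : Finset (Fin N → Fin 2) :=
  Finset.univ.filter fun u => ∀ k ∉ S, u k = 0

/-! ### Reachability in the tree -/

namespace RevTree

variable {N : ℕ}

theorem transGen_wf (T : RevTree N) :
    WellFounded (Relation.TransGen fun a b => T.child a = some b) := by
  have : IsTrans (Fin N) (Relation.TransGen fun a b => T.child a = some b) :=
    ⟨fun _ _ _ => Relation.TransGen.trans⟩
  have : Std.Irrefl (Relation.TransGen fun a b => T.child a = some b) := ⟨T.acyclic⟩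
  exact Finite.wellFounded_of_trans_of_irrefl _

theorem transGen_swap_wf (T : RevTree N) :
    WellFounded (Function.swap (Relation.TransGen fun a b => T.child a = some b)) := by
  have : IsTrans (Fin N) (Function.swap (Relation.TransGen fun a b => T.child a = some b)) :=
    ⟨fun _ _ _ h h' => Relation.TransGen.trans h' h⟩
  have : Std.Irrefl (Function.swap (Relation.TransGen fun a b => T.child a = some b)) :=
    ⟨T.acyclic⟩
  exact Finite.wellFounded_of_trans_of_irrefl _

theorem mem_parents (T : RevTree N) {k n : Fin N} : k ∈ T.parents n ↔ T.child k = some n := by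
  simp [parents]

theorem mem_tree (T : RevTree N) {k n : Fin N} :
    k ∈ T.tree n ↔ Relation.ReflTransGen (fun a b => T.child a = some b) k n := by
  simp [tree]

theorem self_mem_tree (T : RevTree N) (n : Fin N) : n ∈ T.tree n :=
  T.mem_tree.2 .refl

theorem mem_subtree (T : RevTree N) {k n : Fin N} : k ∈ T.subtree n ↔ k ∈ T.tree n ∧ k ≠ n := by
  simp [subtree]

theorem child_ne_self (T : RevTree N) {n : Fin N} : T.child n ≠ some n :=
  fun h => T.acyclic n (.single h)

/-- The node `n` leaves `tree n` along its child edge, by acyclicity. -/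
theorem child_not_mem_tree (T : RevTree N) {n c : Fin N} (h : T.child n = some c) :
    c ∉ T.tree n := fun hc =>
  T.acyclic n (Relation.TransGen.head' h (T.mem_tree.1 hc))

theorem mem_subtree_of_child (T : RevTree N) {k m n : Fin N} (h : T.child k = some m)
    (hm : m ∈ T.tree n) : k ∈ T.subtree n := by
  refine T.mem_subtree.2 ⟨T.mem_tree.2 (.head h (T.mem_tree.1 hm)), ?_⟩
  rintro rfl
  exact T.child_not_mem_tree h hm

theorem exists_child_of_mem_subtree (T : RevTree N) {k n : Fin N} (hk : k ∈ T.subtree n) :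
    ∃ c ∈ T.tree n, T.child k = some c := by
  obtain ⟨h, hne⟩ := T.mem_subtree.1 hk
  rcases Relation.ReflTransGen.cases_head (T.mem_tree.1 h) with h | ⟨c, h1, h2⟩
  · exact absurd h hne
  · exact ⟨c, T.mem_tree.2 h2, h1⟩

end RevTree

/-! ### Sums over labelings -/

/-- Splitting a labeling into its restrictions to `P` and to the complement of `P`. -/
theorem sum_labelings_eq {N : ℕ} (P : Finset (Fin N)) (F : (Fin N → Fin 2) → ℝ) :
    ∑ Y, F Y = ∑ v ∈ assignments Pᶜ, ∑ u ∈ assignments P, F (P.piecewise u v) := by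
  rw [← Finset.sum_product']
  refine Finset.sum_nbij' (fun Y => (P.piecewise 0 Y, P.piecewise Y 0))
    (fun p => P.piecewise p.2 p.1) ?_ ?_ ?_ ?_ ?_
  · intro Y _
    simp only [assignments, mem_product, mem_filter, mem_univ, true_and, mem_compl, not_not]
    constructor
    · intro k hk; simp [hk]
    · intro k hk; simp [hk]
  · intro p _; simp
  · intro Y _
    ext k
    by_cases hk : k ∈ P <;> simp [hk]
  · intro p hp
    simp only [assignments, mem_product, mem_filter, mem_univ, true_and, mem_compl, not_not] at hp
    ext k
    · by_cases hk : k ∈ P <;> simp [hk, hp.1 k]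
    · by_cases hk : k ∈ P <;> simp [hk, hp.2 k]
  · intro Y _
    congr 1
    ext k
    by_cases hk : k ∈ P <;> simp [hk]

theorem sum_assignments_prod {N : ℕ} (P : Finset (Fin N)) (f : Fin N → Fin 2 → ℝ) :
    ∑ u ∈ assignments P, ∏ k ∈ P, f k (u k) = ∏ k ∈ P, ∑ y, f k y := by
  have h1 : assignments P
      = Fintype.piFinset fun k => if k ∈ P then (Finset.univ : Finset (Fin 2)) else {0} := by
    ext u
    simp only [assignments, mem_filter, mem_univ, true_and, Fintype.mem_piFinset]
    refine forall_congr' fun k => ?_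
    by_cases hk : k ∈ P <;> simp [hk]
  have h2 := Finset.prod_univ_sum
    (fun k => if k ∈ P then (Finset.univ : Finset (Fin 2)) else {0})
    (fun k y => if k ∈ P then f k y else 1)
  rw [h1]
  have h3 : ∀ u : Fin N → Fin 2,
      ∏ k ∈ P, f k (u k) = ∏ k, if k ∈ P then f k (u k) else 1 := fun u => by simp
  simp only [h3]
  rw [← h2, ← Finset.prod_subset (Finset.subset_univ P)]
  · refine Finset.prod_congr rfl fun k hk => ?_
    simp [hk]
  · intro k _ hk
    simp [hk]

theorem sum_assignments_singleton {N : ℕ} (m : Fin N) (f : Fin 2 → ℝ) :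
    ∑ u ∈ assignments {m}, f (u m) = ∑ y, f y := by
  simpa using sum_assignments_prod {m} fun _ => f

/-- A factor `L` may be replaced by `L'` inside a sum over all labelings as soon as the two have
the same partial sums over the labels on `P` and the remaining factor ignores these labels. -/
theorem sum_mul_congr_of_partial {N : ℕ} (P : Finset (Fin N)) (G L L' : (Fin N → Fin 2) → ℝ)
    (hG : ∀ u v, G (P.piecewise u v) = G v)
    (h : ∀ v, ∑ u ∈ assignments P, L (P.piecewise u v)
      = ∑ u ∈ assignments P, L' (P.piecewise u v)) :
    ∑ Y, G Y * L Y = ∑ Y, G Y * L' Y := by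
  rw [sum_labelings_eq P, sum_labelings_eq P]
  refine Finset.sum_congr rfl fun v _ => ?_
  simp only [hG, ← Finset.mul_sum, h]

theorem sum_leafPrior (π : ℝ) : ∑ y, leafPrior π y = 1 := by
  simp [leafPrior]

theorem sum_transProb (ρ : ℝ) {z : ℕ} (hz : z ≤ 1) :
    ∑ y : Fin 2, transProb ρ (y : ℕ) z = 1 := by
  interval_cases z <;> simp [transProb]

theorem nodeFactor_congr {N : ℕ} (T : RevTree N) (π ρ : ℝ) {Y Y' : Fin N → Fin 2} {m : Fin N}
    (hm : Y m = Y' m) (h : ∀ k ∈ T.parents m, Y k = Y' k) :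
    nodeFactor T π ρ Y m = nodeFactor T π ρ Y' m := by
  unfold nodeFactor
  rw [hm, Finset.prod_congr rfl fun k hk => by rw [h k hk]]

theorem sum_nodeFactor {N : ℕ} (T : RevTree N) (π ρ : ℝ) (v : Fin N → Fin 2) (m : Fin N) :
    ∑ u ∈ assignments {m}, nodeFactor T π ρ (({m} : Finset (Fin N)).piecewise u v) m = 1 := by
  have hpar : ∀ u : Fin N → Fin 2, ∀ k ∈ T.parents m,
      ({m} : Finset (Fin N)).piecewise u v k = v k := by
    intro u k hk
    refine Finset.piecewise_eq_of_notMem _ _ _ ?_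
    rintro hkm
    rw [Finset.mem_singleton.1 hkm] at hk
    exact T.child_ne_self (T.mem_parents.1 hk)
  by_cases hl : T.IsLeaf m
  · simp only [nodeFactor, hl, if_true, Finset.piecewise_singleton, Function.update_self]
    rw [sum_assignments_singleton m, sum_leafPrior]
  · have : ∀ u : Fin N → Fin 2, nodeFactor T π ρ (({m} : Finset (Fin N)).piecewise u v) m
        = transProb ρ (u m : ℕ) (∏ k ∈ T.parents m, (v k : ℕ)) := by
      intro u
      rw [nodeFactor, if_neg hl, Finset.prod_congr rfl fun k hk => by rw [hpar u k hk]]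
      simp
    simp only [this]
    rw [sum_assignments_singleton m fun y => transProb ρ (y : ℕ) (∏ k ∈ T.parents m, (v k : ℕ))]
    exact sum_transProb ρ (Finset.prod_le_one' fun k _ => by omega)

/-! ### Eliminating nodes one at a time -/

open scoped Classical in
/-- The factor of node `x` in the labeling `Y` once the nodes of `B` have been summed out
and those of `A` have been absorbed into messages `g`. A node that no longer
matters (one in `B`, or one in `A` whose child is in `A`) keeps its label, but with the weight
`1` on the label `0` and `0` on the label `1`, so that sums still range over all labelings;
a node of `A` whose child is not in `A` carries its message; every other node carries its feature
weight `q` and its class factor. -/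
noncomputable def elimFactor {N : ℕ} (T : RevTree N) (π ρ : ℝ) (q g : Fin N → Fin 2 → ℝ)
    (B A : Finset (Fin N)) (Y : Fin N → Fin 2) (x : Fin N) : ℝ :=
  if x ∈ B then (if Y x = 0 then 1 else 0)
  else if x ∈ A then
    (if ∃ c ∈ A, T.child x = some c then (if Y x = 0 then 1 else 0) else g x (Y x))
  else q x (Y x) * nodeFactor T π ρ Y x

theorem elimFactor_congr {N : ℕ} (T : RevTree N) (π ρ : ℝ) (q g : Fin N → Fin 2 → ℝ)
    (B A : Finset (Fin N)) {Y Y' : Fin N → Fin 2} {x : Fin N} (hx : Y x = Y' x)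
    (h : x ∉ B → x ∉ A → ∀ k ∈ T.parents x, Y k = Y' k) :
    elimFactor T π ρ q g B A Y x = elimFactor T π ρ q g B A Y' x := by
  unfold elimFactor
  by_cases hB : x ∈ B
  · simp [hB, hx]
  by_cases hA : x ∈ A
  · simp [hA, hx]
  · simp only [hB, hA, if_false]
    rw [hx, nodeFactor_congr T π ρ hx (h hB hA)]

/-- A child-closed set of nodes without features can be summed out: its nodes are removed
starting from the root, and the class factor of a node sums to `1` over its label. -/
theorem sum_elim_pre {N : ℕ} (T : RevTree N) (π ρ : ℝ) (q g : Fin N → Fin 2 → ℝ)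
    (B : Finset (Fin N)) (hq : ∀ m ∈ B, ∀ y, q m y = 1)
    (hB : ∀ m ∈ B, ∀ c, T.child m = some c → c ∈ B) :
    ∑ Y, ∏ x, elimFactor T π ρ q g ∅ ∅ Y x = ∑ Y, ∏ x, elimFactor T π ρ q g B ∅ Y x := by
  induction hn : B.card generalizing B with
  | zero => rw [Finset.card_eq_zero.1 hn]
  | succ s ih =>
    have hne : (B : Set (Fin N)).Nonempty := by
      simpa using Finset.card_pos.1 (by omega : 0 < B.card)
    -- no parent of `m` is in `B`, so `B.erase m` is again child-closed
    obtain ⟨m, hmB, hmin⟩ := T.transGen_wf.has_min _ hne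
    have hmB : m ∈ B := hmB
    have hpar : ∀ k ∈ B, T.child k ≠ some m := fun k hk h => hmin k hk (.single h)
    rw [ih (B.erase m) (fun k hk => hq k (Finset.mem_of_mem_erase hk))
      (fun k hk c hc => Finset.mem_erase.2 ⟨fun e =>
        hpar k (Finset.mem_of_mem_erase hk) (e ▸ hc), hB k (Finset.mem_of_mem_erase hk) c hc⟩)
      (by rw [Finset.card_erase_of_mem hmB]; omega)]
    have hout : ∀ (Y : Fin N → Fin 2) (x : Fin N), x ≠ m →
        elimFactor T π ρ q g (B.erase m) ∅ Y x = elimFactor T π ρ q g B ∅ Y x := by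
      intro Y x hx
      simp [elimFactor, hx]
    have hsplit : ∀ C : Finset (Fin N), ∀ Y : Fin N → Fin 2,
        ∏ x, elimFactor T π ρ q g C ∅ Y x
          = (∏ x ∈ Finset.univ.erase m, elimFactor T π ρ q g C ∅ Y x)
            * elimFactor T π ρ q g C ∅ Y m :=
      fun C Y => (Finset.prod_erase_mul _ _ (Finset.mem_univ m)).symm
    simp only [hsplit]
    rw [Finset.sum_congr rfl fun Y _ => by
      rw [Finset.prod_congr rfl fun x hx => hout Y x (Finset.ne_of_mem_erase hx)]]
    refine sum_mul_congr_of_partial {m}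
      (fun Y => ∏ x ∈ Finset.univ.erase m, elimFactor T π ρ q g B ∅ Y x)
      (fun Y => elimFactor T π ρ q g (B.erase m) ∅ Y m)
      (fun Y => elimFactor T π ρ q g B ∅ Y m) ?_ ?_
    · intro u v
      refine Finset.prod_congr rfl fun x hx => elimFactor_congr T π ρ q g B ∅ ?_ ?_
      · simp [Finset.ne_of_mem_erase hx]
      · -- the only node whose class factor involves the label of `m` besides `m` is its child
        intro hxB _ k hk
        refine Finset.piecewise_eq_of_notMem _ _ _ fun hkm => hxB ?_
        rw [Finset.mem_singleton.1 hkm] at hk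
        exact hB m hmB x (T.mem_parents.1 hk)
    · intro v
      have h1 : ∀ Y, elimFactor T π ρ q g (B.erase m) ∅ Y m = nodeFactor T π ρ Y m := by
        intro Y; simp [elimFactor, hq m hmB]
      have h2 : ∀ Y, elimFactor T π ρ q g B ∅ Y m = if Y m = 0 then 1 else 0 := by
        intro Y; simp [elimFactor, hmB]
      simp only [h1, h2]
      rw [sum_nodeFactor]
      simp only [Finset.piecewise_singleton, Function.update_self]
      rw [sum_assignments_singleton m fun y => if y = 0 then (1 : ℝ) else 0]
      simp

/-- A parent-closed set of nodes can be absorbed into messages: its nodes are processed starting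
from the leaves, and the message of a node is obtained by summing over the labels of its parents,
which occur in no other factor. Hypothesis `hg` is the message recursion, with the feature weight
`q` included in the message. -/
theorem sum_elim_tree {N : ℕ} (T : RevTree N) (π ρ : ℝ) (q g : Fin N → Fin 2 → ℝ)
    (B A : Finset (Fin N)) (hdisj : ∀ m ∈ A, m ∉ B)
    (hA : ∀ m ∈ A, ∀ k, T.child k = some m → k ∈ A)
    (hg : ∀ m ∈ A, ∀ v : Fin N → Fin 2, g m (v m) = q m (v m) *
      ∑ u ∈ assignments (T.parents m), nodeFactor T π ρ ((T.parents m).piecewise u v) m *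
        ∏ k ∈ T.parents m, g k (u k)) :
    ∑ Y, ∏ x, elimFactor T π ρ q g B ∅ Y x = ∑ Y, ∏ x, elimFactor T π ρ q g B A Y x := by
  induction hn : A.card generalizing A with
  | zero => rw [Finset.card_eq_zero.1 hn]
  | succ s ih =>
    have hne : (A : Set (Fin N)).Nonempty := by
      simpa using Finset.card_pos.1 (by omega : 0 < A.card)
    -- the child of `m` is not in `A`, so `A.erase m` is again parent-closed
    obtain ⟨m, hmA, hmin⟩ := T.transGen_swap_wf.has_min _ hne
    have hmA : m ∈ A := hmA
    have hchild : ∀ c ∈ A, T.child m ≠ some c := fun c hc h => hmin c hc (.single h)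
    rw [ih (A.erase m) (fun k hk => hdisj k (Finset.mem_of_mem_erase hk))
      (fun k hk p hp => Finset.mem_erase.2 ⟨fun e =>
        hchild k (Finset.mem_of_mem_erase hk) (e ▸ hp), hA k (Finset.mem_of_mem_erase hk) p hp⟩)
      (fun k hk => hg k (Finset.mem_of_mem_erase hk))
      (by rw [Finset.card_erase_of_mem hmA]; omega)]
    set P := T.parents m with hP
    have hmP : m ∉ P := fun h => T.child_ne_self (T.mem_parents.1 h)
    have hPc : ∀ k ∈ P, T.child k = some m := fun k hk => T.mem_parents.1 hk
    have hPA : ∀ k ∈ P, k ∈ A := fun k hk => hA m hmA k (hPc k hk)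
    have hPm : ∀ k ∈ P, k ≠ m := fun k hk e => hmP (e ▸ hk)
    have hout : ∀ (Y : Fin N → Fin 2) (x : Fin N), x ∉ insert m P →
        elimFactor T π ρ q g B (A.erase m) Y x = elimFactor T π ρ q g B A Y x := by
      intro Y x hx
      rw [Finset.mem_insert, not_or] at hx
      have hc : (∃ c ∈ A.erase m, T.child x = some c) ↔ ∃ c ∈ A, T.child x = some c := by
        refine exists_congr fun c => ?_
        rw [Finset.mem_erase]
        refine ⟨fun h => ⟨h.1.2, h.2⟩, fun h => ⟨⟨?_, h.1⟩, h.2⟩⟩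
        rintro rfl
        exact hx.2 (T.mem_parents.2 h.2)
      simp only [elimFactor, hc]
      simp only [Finset.mem_erase, ne_eq, hx.1, not_false_eq_true, true_and]
    have hsplit : ∀ C : Finset (Fin N), ∀ Y : Fin N → Fin 2,
        ∏ x, elimFactor T π ρ q g B C Y x
          = (∏ x ∈ (insert m P)ᶜ, elimFactor T π ρ q g B C Y x)
            * (elimFactor T π ρ q g B C Y m * ∏ k ∈ P, elimFactor T π ρ q g B C Y k) := by
      intro C Y
      rw [← Finset.prod_insert hmP, Finset.prod_compl_mul_prod]
    simp only [hsplit]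
    rw [Finset.sum_congr rfl fun Y _ => by
      rw [Finset.prod_congr rfl fun x hx => hout Y x (Finset.mem_compl.1 hx)]]
    refine sum_mul_congr_of_partial P
      (fun Y => ∏ x ∈ (insert m P)ᶜ, elimFactor T π ρ q g B A Y x)
      (fun Y => elimFactor T π ρ q g B (A.erase m) Y m *
        ∏ k ∈ P, elimFactor T π ρ q g B (A.erase m) Y k)
      (fun Y => elimFactor T π ρ q g B A Y m * ∏ k ∈ P, elimFactor T π ρ q g B A Y k) ?_ ?_
    · intro u v
      refine Finset.prod_congr rfl fun x hx => ?_
      rw [Finset.mem_compl, Finset.mem_insert, not_or] at hx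
      refine elimFactor_congr T π ρ q g B A (Finset.piecewise_eq_of_notMem _ _ _ hx.2) ?_
      intro _ _ k hk
      refine Finset.piecewise_eq_of_notMem _ _ _ fun hkP => hx.1 ?_
      exact Option.some_injective _ ((T.mem_parents.1 hk).symm.trans (hPc k hkP))
    · intro v
      have h1 : ∀ u : Fin N → Fin 2,
          elimFactor T π ρ q g B (A.erase m) (P.piecewise u v) m
            = q m (v m) * nodeFactor T π ρ (P.piecewise u v) m := by
        intro u; simp [elimFactor, hdisj m hmA, hmP]
      have h2 : ∀ u : Fin N → Fin 2,
          ∏ k ∈ P, elimFactor T π ρ q g B (A.erase m) (P.piecewise u v) k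
            = ∏ k ∈ P, g k (u k) := by
        intro u
        refine Finset.prod_congr rfl fun k hk => ?_
        simp [elimFactor, hdisj k (hPA k hk), hPA k hk, hPm k hk, hPc k hk, hk]
      have h3 : ∀ u : Fin N → Fin 2,
          elimFactor T π ρ q g B A (P.piecewise u v) m = g m (v m) := by
        intro u
        have hno : ¬ ∃ c ∈ A, T.child m = some c := fun ⟨c, hc, h⟩ => hchild c hc h
        rw [elimFactor, if_neg (hdisj m hmA), if_pos hmA, if_neg hno,
          Finset.piecewise_eq_of_notMem _ _ _ hmP]
      have h4 : ∀ u : Fin N → Fin 2,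
          ∏ k ∈ P, elimFactor T π ρ q g B A (P.piecewise u v) k
            = ∏ k ∈ P, (if u k = 0 then 1 else 0) := by
        intro u
        refine Finset.prod_congr rfl fun k hk => ?_
        simp [elimFactor, hdisj k (hPA k hk), hPA k hk, hPc k hk, hk, hmA]
      simp only [h1, h2, h3, h4]
      rw [← Finset.mul_sum, sum_assignments_prod P fun _ y => if y = 0 then (1 : ℝ) else 0,
        hg m hmA v, Finset.mul_sum]
      simp only [Finset.sum_ite_eq', Finset.sum_ite_eq, Finset.mem_univ, if_true,
        Finset.prod_const_one, mul_one, mul_assoc]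
      rfl

/-- in a hidden Markov tree, the forward incoming message satisfies
`f_n^i(y_n) = P(x_{subtree(n)}, y_n)` for every node `n` and label `y_n`. -/
theorem forward_incoming_message_eq_marginal
{N : ℕ} (T : RevTree N) (π ρ : ℝ)
    (hπ : π ∈ Set.Ioo (0 : ℝ) 1) (hρ : ρ ∈ Set.Ioo (0 : ℝ) 1)
    (px : Fin N → Fin 2 → ℝ) (hpx : ∀ n y, 0 ≤ px n y)
(fi fo : Fin N → Fin 2 → ℝ)
    (hfiLeaf : ∀ n, T.IsLeaf n → ∀ y : Fin 2, fi n y = leafPrior π y)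
    (hfiInt : ∀ n, ¬ T.IsLeaf n → ∀ y : Fin 2,
      fi n y = ∑ u ∈ assignments (T.parents n),
        transProb ρ (y : ℕ) (∏ k ∈ T.parents n, (u k : ℕ)) *
          ∏ k ∈ T.parents n, fo k (u k))
    (hfo : ∀ n y, fo n y = fi n y * px n y) :
    ∀ (n : Fin N) (y : Fin 2),
      fi n y = marginal T π ρ px (T.subtree n) {n} (fun _ => y) := by
  intro n y
  -- feature weights that turn the marginal into an unrestricted sum over all labelings
  set q : Fin N → Fin 2 → ℝ := fun m z =>
    if m ∈ T.subtree n then px m z else if m = n then (if z = y then 1 else 0) else 1 with hq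
  have hnsub : n ∉ T.subtree n := fun h => (T.mem_subtree.1 h).2 rfl
  have hmarg : marginal T π ρ px (T.subtree n) {n} (fun _ => y)
      = ∑ Y, ∏ x, elimFactor T π ρ q (fun m z => q m z * fi m z) ∅ ∅ Y x := by
    rw [marginal, Finset.sum_filter]
    refine Finset.sum_congr rfl fun Y _ => ?_
    have h1 : ∏ x, q x (Y x) = (∏ m ∈ T.subtree n, px m (Y m)) * if Y n = y then 1 else 0 := by
      rw [← Finset.prod_mul_prod_compl (T.subtree n)]
      congr 1
      · exact Finset.prod_congr rfl fun x hx => by simp [hq, hx]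
      · rw [Finset.prod_eq_single_of_mem n (Finset.mem_compl.2 hnsub)]
        · simp [hq, hnsub]
        · intro x hx hxn
          simp [hq, Finset.mem_compl.1 hx, hxn]
    have h2 : ∀ x, elimFactor T π ρ q (fun m z => q m z * fi m z) ∅ ∅ Y x
        = q x (Y x) * nodeFactor T π ρ Y x := fun x => by simp [elimFactor]
    simp only [h2, Finset.prod_mul_distrib, h1, Finset.mem_singleton, forall_eq]
    split_ifs <;> simp
  rw [hmarg, sum_elim_pre T π ρ q _ (T.tree n)ᶜ, sum_elim_tree T π ρ q _ (T.tree n)ᶜ (T.tree n)]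
  · -- only the message of `n` is left, all other labels being frozen at `0`
    have h : ∀ (Y : Fin N → Fin 2) (x : Fin N),
        elimFactor T π ρ q (fun m z => q m z * fi m z) (T.tree n)ᶜ (T.tree n) Y x
          = (fun (x : Fin N) (z : Fin 2) => if x = n then (if z = y then fi n z else 0)
              else if z = 0 then 1 else 0) x (Y x) := by
      intro Y x
      by_cases hxn : x = n
      · subst hxn
        have hno : ¬ ∃ c ∈ T.tree x, T.child x = some c :=
          fun ⟨c, hc, h⟩ => T.child_not_mem_tree h hc
        simp [elimFactor, T.self_mem_tree, hno, hq, hnsub]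
      · by_cases hx : x ∈ T.tree n
        · have hyes := T.exists_child_of_mem_subtree (T.mem_subtree.2 ⟨hx, hxn⟩)
          simp [elimFactor, hx, hyes, hxn]
        · simp [elimFactor, hx, hxn]
    simp only [h]
    rw [← Fintype.piFinset_univ, ← Finset.prod_univ_sum (fun _ => Finset.univ)
        (fun (x : Fin N) (z : Fin 2) => if x = n then (if z = y then fi n z else 0)
          else if z = 0 then 1 else 0),
      Finset.prod_eq_single_of_mem n (Finset.mem_univ n)]
    · simp
    · intro x _ hx
      simp [hx]
  · intro m hm; simp [hm]
  · intro m hm k hk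
    exact (T.mem_subtree.1 (T.mem_subtree_of_child hk hm)).1
  · intro m hm v
    have hmP : m ∉ T.parents m := fun h => T.child_ne_self (T.mem_parents.1 h)
    have hk : ∀ u : Fin N → Fin 2, ∏ k ∈ T.parents m, q k (u k) * fi k (u k)
        = ∏ k ∈ T.parents m, fo k (u k) := by
      intro u
      refine Finset.prod_congr rfl fun k hk => ?_
      rw [hfo, mul_comm]
      simp [hq, T.mem_subtree_of_child (T.mem_parents.1 hk) hm]
    simp only [hk]
    congr 1
    by_cases hl : T.IsLeaf m
    · have hP : T.parents m = ∅ := hl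
      have hass : assignments (∅ : Finset (Fin N)) = {0} := by
        ext u; simp [assignments, funext_iff]
      simp [hfiLeaf m hl, hP, hass, nodeFactor, hl]
    · rw [hfiInt m hl]
      refine Finset.sum_congr rfl fun u _ => ?_
      rw [nodeFactor, if_neg hl, Finset.piecewise_eq_of_notMem _ _ _ hmP]
      congr 2
      exact Finset.prod_congr rfl fun k hk => by rw [Finset.piecewise_eq_of_mem _ _ _ hk]
  · intro m hm z
    rw [Finset.mem_compl] at hm
    have h1 : m ≠ n := by rintro rfl; exact hm (T.self_mem_tree _)
    have h2 : m ∉ T.subtree n := fun h => hm (T.mem_subtree.1 h).1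
    simp [hq, h1, h2]
  · intro m hm c hc
    rw [Finset.mem_compl] at hm ⊢
    exact fun h => hm (T.mem_subtree.1 (T.mem_subtree_of_child hc h)).1
end

section
/- In a hidden Markov tree, the backward incoming message satisfies, for every node n and every label y_n ∈ {0,1}, g_n^i(y_n) · P(y_n) = P(x_{pre(n)}, y_n), where P(y_n) denotes the marginal probability of the label of node n; equivalently, since P(y_n) > 0 when π, ρ ∈ (0,1), g_n^i(y_n) = P(x_{pre(n)} | y_n). -/
/-! The proof rewrites every sum over labelings as an expectation `avg` under the uniform law on
labelings, for which the labels are independent bits: functions depending on disjoint sets of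
nodes have multiplicative averages (`avg_mul`, `avg_prod`).

For feature likelihoods `q`, give node `m` the weight `2 * q m (y_m) * P(y_m | parents)`, where
the factor `2` cancels the uniform mass of the label of `m`. Let `treeMass q n y` be the average of
the weights over `tree n` on the event `y_n = y`, and `preMass q n y` the conditional average of
the weights over `pre n` given `y_n = y`. Three facts carry the argument.

* Fixing the labels of the parents of `n` makes the trees above these parents independent, so
  `treeMass` satisfies the recursion of the forward messages (`treeMass_rec`).
* Fixing the labels of the child `c` and of the siblings makes `pre c ∪ {c}` and the trees above
  the siblings independent, so `preMass` satisfies the recursion of the backward messages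
  (`preMass_rec`).
* Given `y_n`, the weights on `tree n` and on `pre n` are independent (`avg_split`).

Induction along the edges identifies `preMass px` with the incoming message `g_n^i`. For `q = 1`
the same recursions give `∑ y, treeMass 1 n y = 1` and `preMass 1 n y = 1`. Hence
`P(y_n) = treeMass 1 n y_n` and `P(x_{pre(n)}, y_n) = treeMass 1 n y_n * preMass px n y_n`, which
is the claim. -/

open Finset

namespace HMT

variable {N : ℕ}

/-! ### Averages over uniform labelings -/

/-- The average of `f` over all binary labelings, each with weight `2⁻ᴺ`. -/
noncomputable def avg (f : (Fin N → Fin 2) → ℝ) : ℝ := (∑ Y, f Y) / 2 ^ N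

/-- The indicator of the event that node `n` has label `y`. -/
noncomputable def ind (n : Fin N) (y : Fin 2) (Y : Fin N → Fin 2) : ℝ := if Y n = y then 1 else 0

lemma avg_const_mul (c : ℝ) (f : (Fin N → Fin 2) → ℝ) : avg (fun Y => c * f Y) = c * avg f := by
  simp only [avg, ← Finset.mul_sum, mul_div_assoc]

lemma avg_sum {ι : Type*} (s : Finset ι) (f : ι → (Fin N → Fin 2) → ℝ) :
    avg (fun Y => ∑ i ∈ s, f i Y) = ∑ i ∈ s, avg (f i) := by
  simp only [avg]
  rw [Finset.sum_comm, Finset.sum_div]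

lemma avg_one : avg (fun _ : Fin N → Fin 2 => (1 : ℝ)) = 1 := by
  simp [avg]

/-- Independence of the labels under the uniform law. -/
lemma avg_mul {f g : (Fin N → Fin 2) → ℝ} {A B : Set (Fin N)} (hf : DependsOn f A)
    (hg : DependsOn g B) (h : Disjoint A B) :
    avg (fun Y => f Y * g Y) = avg f * avg g := by
  classical
  -- Exchanging the coordinates outside `A` between two labelings is an involution on pairs.
  let mix : (Fin N → Fin 2) → (Fin N → Fin 2) → (Fin N → Fin 2) :=
    fun Y Z i => if i ∈ A then Y i else Z i
  let e : Equiv.Perm ((Fin N → Fin 2) × (Fin N → Fin 2)) :=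
    Function.Involutive.toPerm (fun p => (mix p.1 p.2, mix p.2 p.1)) (by
      rintro ⟨Y, Z⟩
      ext i <;> simp only [mix] <;> split_ifs <;> rfl)
  have h1 : ∀ Y Z, f Y = f (mix Y Z) := fun Y Z => hf fun i hi => by simp [mix, hi]
  have h2 : ∀ Y Z, g Z = g (mix Y Z) := fun Y Z => hg fun i hi => by
    simp [mix, Set.disjoint_right.1 h hi]
  have key : (∑ Y, f Y) * ∑ Z, g Z = 2 ^ N * ∑ Y, f Y * g Y := by
    calc (∑ Y, f Y) * ∑ Z, g Z
        = ∑ p : (Fin N → Fin 2) × (Fin N → Fin 2), f p.1 * g p.2 := by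
          rw [Finset.sum_mul_sum, Fintype.sum_prod_type]
      _ = ∑ p, (fun p : (Fin N → Fin 2) × (Fin N → Fin 2) => f p.1 * g p.1) (e p) := by
          refine Finset.sum_congr rfl fun p _ => ?_
          change f p.1 * g p.2 = f (mix p.1 p.2) * g (mix p.1 p.2)
          rw [← h1, ← h2]
      _ = ∑ p : (Fin N → Fin 2) × (Fin N → Fin 2), f p.1 * g p.1 :=
          Equiv.sum_comp e fun p => f p.1 * g p.1
      _ = 2 ^ N * ∑ Y, f Y * g Y := by
          rw [Fintype.sum_prod_type, Finset.mul_sum]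
          simp
  simp only [avg]
  rw [div_mul_div_comm, key]
  field_simp

lemma dependsOn_mul {f g : (Fin N → Fin 2) → ℝ} {A : Set (Fin N)} (hf : DependsOn f A)
    (hg : DependsOn g A) : DependsOn (fun Y => f Y * g Y) A :=
  fun _ _ h => congrArg₂ _ (hf h) (hg h)

lemma dependsOn_prod {ι : Type*} {s : Finset ι} {f : ι → (Fin N → Fin 2) → ℝ} {A : Set (Fin N)}
    (hf : ∀ i ∈ s, DependsOn (f i) A) : DependsOn (fun Y => ∏ i ∈ s, f i Y) A :=
  fun _ _ h => Finset.prod_congr rfl fun i hi => hf i hi h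

lemma dependsOn_ind (n : Fin N) (y : Fin 2) {A : Set (Fin N)} (h : n ∈ A) :
    DependsOn (ind n y) A := fun _ _ hY => by simp only [ind, hY n h]

lemma dependsOn_mono {f : (Fin N → Fin 2) → ℝ} {A B : Set (Fin N)} (hf : DependsOn f A)
    (h : A ⊆ B) : DependsOn f B := fun _ _ hY => hf fun i hi => hY i (h hi)

lemma avg_prod {ι : Type*} (s : Finset ι) (f : ι → (Fin N → Fin 2) → ℝ) (A : ι → Set (Fin N))
    (hf : ∀ i ∈ s, DependsOn (f i) (A i))
    (hA : ∀ i ∈ s, ∀ j ∈ s, i ≠ j → Disjoint (A i) (A j)) :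
    avg (fun Y => ∏ i ∈ s, f i Y) = ∏ i ∈ s, avg (f i) := by
  classical
  induction s using Finset.induction_on with
  | empty => simpa using avg_one
  | insert a s ha ih =>
    simp only [Finset.prod_insert ha]
    rw [avg_mul (A := A a) (B := ⋃ i ∈ s, A i) (hf a (by simp)), ih]
    · exact fun i hi => hf i (by simp [hi])
    · exact fun i hi j hj => hA i (by simp [hi]) j (by simp [hj])
    · exact dependsOn_prod fun i hi =>
        dependsOn_mono (hf i (by simp [hi])) (Set.subset_biUnion_of_mem (u := A) hi)
    · simp only [Set.disjoint_iUnion_right]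
      exact fun i hi => hA a (by simp) i (by simp [hi]) (fun h => ha (h ▸ hi))

lemma avg_ind (n : Fin N) (y : Fin 2) : avg (ind n y) = 1 / 2 := by
  -- Flipping the label of `n` exchanges the event `Y n = y` with its complement.
  have h : ∑ Y, ind n y Y = ∑ Y : Fin N → Fin 2, (1 - ind n y Y) := by
    rw [← Equiv.sum_comp (Equiv.addRight (Pi.single n (1 : Fin 2)))]
    refine Finset.sum_congr rfl fun Y _ => ?_
    have : ∀ a b : Fin 2, a + 1 = b ↔ ¬ a = b := by decide
    by_cases hY : Y n = y <;> simp [ind, this, hY]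
  rw [Finset.sum_sub_distrib] at h
  simp only [Finset.sum_const, Finset.card_univ, Fintype.card_pi, Fintype.card_fin,
    Finset.prod_const, nsmul_eq_mul, mul_one, Nat.cast_pow, Nat.cast_ofNat] at h
  simp only [avg]
  have h2 : (2 : ℝ) ^ N ≠ 0 := by positivity
  field_simp
  linarith

lemma sum_ind (n : Fin N) (Y : Fin N → Fin 2) : ∑ y, ind n y Y = 1 := by
  simp [ind]

lemma sum_assignments_prod (S : Finset (Fin N)) (h : Fin N → Fin 2 → ℝ) :
    ∑ u ∈ assignments S, ∏ k ∈ S, h k (u k) = ∏ k ∈ S, ∑ y, h k y := by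
  have e : assignments S = Fintype.piFinset (fun k => if k ∈ S then univ else {0}) := by
    ext u
    simp only [assignments, Finset.mem_filter, Finset.mem_univ, true_and, Fintype.mem_piFinset]
    refine forall_congr' fun k => ?_
    split_ifs with hk <;> simp [hk]
  have := Finset.prod_univ_sum (fun k => if k ∈ S then (univ : Finset (Fin 2)) else {0})
    (fun k y => if k ∈ S then h k y else 1)
  rw [← e] at this
  simp only [Finset.prod_ite_mem, Finset.univ_inter] at this
  rw [← this, ← Finset.prod_subset (Finset.subset_univ S)]
  · exact Finset.prod_congr rfl fun k hk => by simp [hk]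
  · intro k _ hk
    simp [hk]

lemma sum_assignments_ind (S : Finset (Fin N)) (Y : Fin N → Fin 2) :
    ∑ u ∈ assignments S, ∏ k ∈ S, ind k (u k) Y = 1 := by
  rw [sum_assignments_prod S (fun k y => ind k y Y)]
  exact Finset.prod_eq_one fun k _ => sum_ind k Y

/-! ### Combinatorics of the reverse tree -/

variable (T : RevTree N)

lemma mem_tree {m n : Fin N} :
    m ∈ T.tree n ↔ Relation.ReflTransGen (fun a b => T.child a = some b) m n := by
  simp [RevTree.tree]

lemma mem_parents {k n : Fin N} : k ∈ T.parents n ↔ T.child k = some n := by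
  simp [RevTree.parents]

lemma self_mem_tree (n : Fin N) : n ∈ T.tree n := (mem_tree T).2 .refl

lemma mem_pre {m n : Fin N} : m ∈ T.pre n ↔ m ∉ T.tree n := by simp [RevTree.pre]

lemma parent_mem_tree {k m n : Fin N} (hk : k ∈ T.parents m) (hm : m ∈ T.tree n) :
    k ∈ T.tree n :=
  (mem_tree T).2 (.head ((mem_parents T).1 hk) ((mem_tree T).1 hm))

lemma mem_tree_of_parent {k m n : Fin N} (hk : k ∈ T.parents m) (h : k ∈ T.tree n)
    (hne : k ≠ n) : m ∈ T.tree n := by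
  rcases Relation.ReflTransGen.cases_head ((mem_tree T).1 h) with h | ⟨b, hb, h⟩
  · exact absurd h hne
  · have : b = m := Option.some.inj (hb.symm.trans ((mem_parents T).1 hk))
    exact (mem_tree T).2 (this ▸ h)

lemma parent_mem_pre {k m n : Fin N} (hk : k ∈ T.parents m) (hm : m ∈ T.pre n) (hne : k ≠ n) :
    k ∈ T.pre n :=
  (mem_pre T).2 fun h => (mem_pre T).1 hm (mem_tree_of_parent T hk h hne)

lemma not_mem_tree_parent {k n : Fin N} (hk : k ∈ T.parents n) : n ∉ T.tree k := fun h =>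
  T.acyclic n (.tail' ((mem_tree T).1 h) ((mem_parents T).1 hk))

lemma disjoint_tree {k l n : Fin N} (hk : k ∈ T.parents n) (hl : l ∈ T.parents n) (hne : k ≠ l) :
    Disjoint (T.tree k) (T.tree l) := by
  rw [Finset.disjoint_left]
  intro m h1 h2
  -- Forward paths from `m` are unique, so one of `k`, `l` would lie above the other.
  have hu : Relator.RightUnique (fun a b => T.child a = some b) :=
    fun a b c h h' => Option.some.inj (h.symm.trans h')
  rcases Relation.ReflTransGen.total_of_right_unique hu ((mem_tree T).1 h1)
    ((mem_tree T).1 h2) with h | h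
  · exact not_mem_tree_parent T hl (mem_tree_of_parent T hk ((mem_tree T).2 h) hne)
  · exact not_mem_tree_parent T hk (mem_tree_of_parent T hl ((mem_tree T).2 h) hne.symm)

lemma tree_eq (n : Fin N) : T.tree n = insert n ((T.parents n).biUnion T.tree) := by
  ext m
  simp only [Finset.mem_insert, Finset.mem_biUnion]
  constructor
  · intro h
    rcases Relation.ReflTransGen.cases_tail ((mem_tree T).1 h) with h | ⟨b, hb, h⟩
    · exact .inl h.symm
    · exact .inr ⟨b, (mem_parents T).2 h, (mem_tree T).2 hb⟩
  · rintro (rfl | ⟨k, hk, h⟩)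
    · exact self_mem_tree T m
    · exact (mem_tree T).2 (((mem_tree T).1 h).tail ((mem_parents T).1 hk))

lemma prod_tree (n : Fin N) (w : Fin N → ℝ) :
    ∏ m ∈ T.tree n, w m = w n * ∏ k ∈ T.parents n, ∏ m ∈ T.tree k, w m := by
  rw [tree_eq, Finset.prod_insert, Finset.prod_biUnion]
  · exact fun k hk l hl => disjoint_tree T hk hl
  · simp only [Finset.mem_biUnion, not_exists, not_and]
    exact fun k hk => not_mem_tree_parent T hk

lemma mem_siblings {k n c : Fin N} : k ∈ T.siblings n c ↔ k ∈ T.parents c ∧ k ≠ n := by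
  simp [RevTree.siblings]

lemma parents_eq {n c : Fin N} (h : T.child n = some c) :
    T.parents c = insert n (T.siblings n c) := by
  ext k
  by_cases hk : k = n
  · simp [hk, mem_parents, h]
  · simp [mem_siblings, hk]

lemma not_mem_siblings {n c : Fin N} : n ∉ T.siblings n c := by simp [mem_siblings]

/-- Removing `tree n` from the forest leaves `pre c`, the child `c`, and the sibling trees. -/
lemma prod_pre {n c : Fin N} (h : T.child n = some c) (w : Fin N → ℝ) :
    ∏ m ∈ T.pre n, w m
      = w c * (∏ m ∈ T.pre c, w m) * ∏ k ∈ T.siblings n c, ∏ m ∈ T.tree k, w m := by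
  have hn : n ∈ T.parents c := (mem_parents T).2 h
  have e : T.pre n = insert c (T.pre c ∪ (T.siblings n c).biUnion T.tree) := by
    ext m
    have h1 := tree_eq T c
    rw [parents_eq T h, Finset.biUnion_insert] at h1
    have h2 : m ∈ T.tree c ↔ m = c ∨ m ∈ T.tree n ∨ m ∈ (T.siblings n c).biUnion T.tree := by
      rw [h1]; simp only [Finset.mem_insert, Finset.mem_union]
    have h3 : m ∈ (T.siblings n c).biUnion T.tree → m ∉ T.tree n := by
      simp only [Finset.mem_biUnion, mem_siblings]
      rintro ⟨k, ⟨hk, hkn⟩, hm⟩ hm'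
      exact Finset.disjoint_left.1 (disjoint_tree T hk hn hkn) hm hm'
    have h4 : m = c → m ∉ T.tree n := by
      rintro rfl
      exact not_mem_tree_parent T hn
    simp only [mem_pre, Finset.mem_insert, Finset.mem_union]
    tauto
  rw [e, Finset.prod_insert, Finset.prod_union, Finset.prod_biUnion, mul_assoc]
  · exact fun k hk l hl =>
      disjoint_tree T ((mem_siblings T).1 hk).1 ((mem_siblings T).1 hl).1
  · rw [Finset.disjoint_left]
    simp only [Finset.mem_biUnion, mem_siblings, not_exists, not_and, mem_pre]
    rintro m hm k ⟨hk, -⟩ hmk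
    exact hm ((mem_tree T).2 (((mem_tree T).1 hmk).tail ((mem_parents T).1 hk)))
  · simp only [Finset.mem_union, Finset.mem_biUnion, mem_siblings, mem_pre, self_mem_tree,
      not_true_eq_false, false_or, not_exists, not_and]
    rintro k ⟨hk, -⟩
    exact not_mem_tree_parent T hk

/-- Induction from parents to child. -/
lemma tree_induction {p : Fin N → Prop} (h : ∀ n, (∀ k ∈ T.parents n, p k) → p n) (n : Fin N) :
    p n := by
  have : IsTrans (Fin N) (Relation.TransGen fun a b => T.child a = some b) := inferInstance
  have : Std.Irrefl (Relation.TransGen fun a b => T.child a = some b) := ⟨T.acyclic⟩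
  induction n using (Finite.wellFounded_of_trans_of_irrefl
    (Relation.TransGen fun a b => T.child a = some b)).induction with
  | _ n ih => exact h n fun k hk => ih k (.single ((mem_parents T).1 hk))

/-- Induction from child to parents, starting at the root. -/
lemma root_induction {p : Fin N → Prop} (h0 : p T.root)
    (h : ∀ n c, T.child n = some c → p c → p n) (n : Fin N) : p n := by
  have : Std.Irrefl (Function.swap (Relation.TransGen fun a b => T.child a = some b)) :=
    ⟨T.acyclic⟩
  have : IsTrans (Fin N) (Function.swap (Relation.TransGen fun a b => T.child a = some b)) :=
    ⟨fun a b c h1 h2 => Relation.TransGen.trans h2 h1⟩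
  induction n using (Finite.wellFounded_of_trans_of_irrefl
    (Function.swap (Relation.TransGen fun a b => T.child a = some b))).induction with
  | _ n ih =>
    rcases hc : T.child n with _ | c
    · exact T.root_unique n hc ▸ h0
    · exact h n c hc (ih c (.single hc))

lemma pre_root : T.pre T.root = ∅ := by
  refine Finset.eq_empty_of_forall_notMem fun m => ?_
  rw [mem_pre, not_not]
  induction m using root_induction T with
  | h0 => exact self_mem_tree T _
  | h n c hc ih => exact parent_mem_tree T ((mem_parents T).2 hc) ih

/-! ### Tree masses and their recursions -/

variable (π ρ : ℝ) (q : Fin N → Fin 2 → ℝ)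

/-- The class factor of node `n` as a function of its own label and of the product of the labels
of its parents. -/
noncomputable def loc (n : Fin N) (y : Fin 2) (z : ℕ) : ℝ :=
  if T.IsLeaf n then leafPrior π y else transProb ρ (y : ℕ) z

/-- The weight of node `m` in a labeling: feature likelihood times class factor, doubled so that
averages over labelings become sums. -/
noncomputable def wt (m : Fin N) (Y : Fin N → Fin 2) : ℝ :=
  2 * (q m (Y m) * nodeFactor T π ρ Y m)

/-- `P(x_{tree(n)}, y_n = y)` for the likelihoods `q`, as an average over uniform labelings. -/
noncomputable def treeMass (n : Fin N) (y : Fin 2) : ℝ :=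
  avg fun Y => ind n y Y * ∏ m ∈ T.tree n, wt T π ρ q m Y

/-- `P(x_{pre(n)} | y_n = y)` for the likelihoods `q`: the average of the weights over `pre n`
conditioned on `y_n = y`, an event of uniform probability `1 / 2`. -/
noncomputable def preMass (n : Fin N) (y : Fin 2) : ℝ :=
  2 * avg fun Y => ind n y Y * ∏ m ∈ T.pre n, wt T π ρ q m Y

lemma nodeFactor_eq (Y : Fin N → Fin 2) (n : Fin N) :
    nodeFactor T π ρ Y n = loc T π ρ n (Y n) (∏ k ∈ T.parents n, (Y k : ℕ)) := rfl

lemma dependsOn_wt (m : Fin N) {A : Set (Fin N)} (hm : m ∈ A)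
    (hA : ∀ k ∈ T.parents m, k ∈ A) : DependsOn (wt T π ρ q m) A := by
  intro Y Z h
  simp only [wt, nodeFactor_eq]
  rw [h m hm, Finset.prod_congr rfl fun k hk => by rw [h k (hA k hk)]]

lemma dependsOn_tree (n : Fin N) (y : Fin 2) :
    DependsOn (fun Y => ind n y Y * ∏ m ∈ T.tree n, wt T π ρ q m Y) (T.tree n : Set (Fin N)) :=
  dependsOn_mul (dependsOn_ind n y (by simpa using self_mem_tree T n))
    (dependsOn_prod fun m hm => dependsOn_wt T π ρ q m (by simpa using hm)
      fun k hk => by simpa using parent_mem_tree T hk hm)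

lemma dependsOn_pre (n : Fin N) :
    DependsOn (fun Y => ∏ m ∈ T.pre n, wt T π ρ q m Y) (insert n (T.pre n) : Set (Fin N)) :=
  dependsOn_prod fun m hm => dependsOn_wt T π ρ q m (by simp [hm]) fun k hk => by
    by_cases hkn : k = n
    · simp [hkn]
    · simp [parent_mem_pre T hk hm hkn]

lemma ind_eq_zero_or (n : Fin N) (y : Fin 2) (Y : Fin N → Fin 2) : ind n y Y = 0 ∨ Y n = y := by
  by_cases h : Y n = y <;> simp [ind, h]

lemma prod_ind_eq_zero_or (S : Finset (Fin N)) (u Y : Fin N → Fin 2) :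
    ∏ k ∈ S, ind k (u k) Y = 0 ∨ ∀ k ∈ S, Y k = u k := by
  by_cases h : ∀ k ∈ S, Y k = u k
  · exact .inr h
  · push Not at h
    obtain ⟨k, hk, hne⟩ := h
    exact .inl (Finset.prod_eq_zero hk (by simp [ind, hne]))

lemma treeMass_rec (n : Fin N) (y : Fin 2) :
    treeMass T π ρ q n y = q n y * ∑ u ∈ assignments (T.parents n),
      loc T π ρ n y (∏ k ∈ T.parents n, (u k : ℕ)) *
        ∏ k ∈ T.parents n, treeMass T π ρ q k (u k) := by
  have e : ∀ Y, ind n y Y * ∏ m ∈ T.tree n, wt T π ρ q m Y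
      = ∑ u ∈ assignments (T.parents n),
        (2 * q n y * loc T π ρ n y (∏ k ∈ T.parents n, (u k : ℕ))) *
        (ind n y Y * ∏ k ∈ T.parents n, (ind k (u k) Y * ∏ m ∈ T.tree k, wt T π ρ q m Y)) := by
    intro Y
    rw [← mul_one (_ * _), ← sum_assignments_ind (T.parents n) Y, Finset.mul_sum, prod_tree]
    refine Finset.sum_congr rfl fun u _ => ?_
    rw [Finset.prod_mul_distrib]
    rcases ind_eq_zero_or n y Y with h | h
    · simp [h]
    rcases prod_ind_eq_zero_or (T.parents n) u Y with h' | h'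
    · simp [h']
    have : wt T π ρ q n Y
        = 2 * q n y * loc T π ρ n y (∏ k ∈ T.parents n, (u k : ℕ)) := by
      rw [wt, nodeFactor_eq, h, Finset.prod_congr rfl fun k hk => by rw [h' k hk]]
      ring
    rw [this]
    ring
  rw [treeMass, funext e, avg_sum, Finset.mul_sum]
  refine Finset.sum_congr rfl fun u _ => ?_
  rw [avg_const_mul, avg_mul (A := {n}) (B := ⋃ k ∈ T.parents n, (T.tree k : Set (Fin N))),
    avg_ind, avg_prod (A := fun k => (T.tree k : Set (Fin N)))]
  · simp only [treeMass]
    ring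
  · exact fun k _ => dependsOn_tree T π ρ q k (u k)
  · exact fun k hk l hl hne => by
      rw [Finset.disjoint_coe]; exact disjoint_tree T hk hl hne
  · exact dependsOn_ind n y rfl
  · exact dependsOn_prod fun k hk => dependsOn_mono (dependsOn_tree T π ρ q k (u k))
      (Set.subset_biUnion_of_mem (u := fun k => (T.tree k : Set (Fin N))) hk)
  · simp only [Set.disjoint_iUnion_right, Set.disjoint_singleton_left, Finset.mem_coe]
    exact fun k hk => not_mem_tree_parent T hk

lemma preMass_root (y : Fin 2) : preMass T π ρ q T.root y = 1 := by
  simp [preMass, pre_root, avg_ind]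

lemma preMass_rec {n c : Fin N} (h : T.child n = some c) (y : Fin 2) :
    preMass T π ρ q n y = ∑ yc : Fin 2, ∑ u ∈ assignments (T.siblings n c),
      (preMass T π ρ q c yc * q c yc) *
        transProb ρ (yc : ℕ) ((y : ℕ) * ∏ k ∈ T.siblings n c, (u k : ℕ)) *
          ∏ k ∈ T.siblings n c, treeMass T π ρ q k (u k) := by
  have hn : n ∈ T.parents c := (mem_parents T).2 h
  have hleaf : ¬ T.IsLeaf c := fun hl => by
    rw [RevTree.IsLeaf] at hl
    simp [hl] at hn
  have e : ∀ Y, ind n y Y * ∏ m ∈ T.pre n, wt T π ρ q m Y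
      = ∑ yc : Fin 2, ∑ u ∈ assignments (T.siblings n c),
        (2 * q c yc * transProb ρ (yc : ℕ) ((y : ℕ) * ∏ k ∈ T.siblings n c, (u k : ℕ))) *
        (ind n y Y * ((ind c yc Y * ∏ m ∈ T.pre c, wt T π ρ q m Y) *
          ∏ k ∈ T.siblings n c, (ind k (u k) Y * ∏ m ∈ T.tree k, wt T π ρ q m Y))) := by
    intro Y
    rw [← mul_one (_ * _), ← sum_ind c Y, Finset.mul_sum]
    refine Finset.sum_congr rfl fun yc _ => ?_
    rw [← mul_one (_ * ind c yc Y), ← sum_assignments_ind (T.siblings n c) Y, Finset.mul_sum,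
      prod_pre T h]
    refine Finset.sum_congr rfl fun u _ => ?_
    rw [Finset.prod_mul_distrib]
    rcases ind_eq_zero_or n y Y with h0 | h0
    · simp [h0]
    rcases ind_eq_zero_or c yc Y with h1 | h1
    · simp [h1]
    rcases prod_ind_eq_zero_or (T.siblings n c) u Y with h2 | h2
    · simp [h2]
    have : wt T π ρ q c Y = 2 * q c yc *
        transProb ρ (yc : ℕ) ((y : ℕ) * ∏ k ∈ T.siblings n c, (u k : ℕ)) := by
      rw [wt, nodeFactor_eq, loc, if_neg hleaf, parents_eq T h,
        Finset.prod_insert (not_mem_siblings T), h0, h1,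
        Finset.prod_congr rfl fun k hk => by rw [h2 k hk]]
      ring
    rw [this]
    ring
  rw [preMass, funext e, avg_sum, Finset.mul_sum]
  refine Finset.sum_congr rfl fun yc _ => ?_
  rw [avg_sum, Finset.mul_sum]
  refine Finset.sum_congr rfl fun u _ => ?_
  -- The three independent blocks are `{n}`, `pre c ∪ {c}` and the union of the sibling trees.
  have hsib : DependsOn (fun Y => ∏ k ∈ T.siblings n c,
      (ind k (u k) Y * ∏ m ∈ T.tree k, wt T π ρ q m Y))
      (⋃ k ∈ T.siblings n c, (T.tree k : Set (Fin N))) :=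
    dependsOn_prod fun k hk => dependsOn_mono (dependsOn_tree T π ρ q k (u k))
      (Set.subset_biUnion_of_mem (u := fun k => (T.tree k : Set (Fin N))) hk)
  have hpre : DependsOn (fun Y => ind c yc Y * ∏ m ∈ T.pre c, wt T π ρ q m Y)
      (insert c (T.pre c) : Set (Fin N)) :=
    dependsOn_mul (dependsOn_ind c yc (by simp)) (dependsOn_pre T π ρ q c)
  have hdis : Disjoint (insert c (T.pre c) : Set (Fin N))
      (⋃ k ∈ T.siblings n c, (T.tree k : Set (Fin N))) := by
    simp only [Set.disjoint_iUnion_right, mem_siblings]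
    rintro k ⟨hk, -⟩
    rw [Set.disjoint_right]
    simp only [Set.mem_insert_iff, Finset.mem_coe, mem_pre]
    rintro m hm (rfl | hmc)
    · exact not_mem_tree_parent T hk hm
    · exact hmc ((mem_tree T).2 (((mem_tree T).1 hm).tail ((mem_parents T).1 hk)))
  have hprod : avg (fun Y => ∏ k ∈ T.siblings n c,
      (ind k (u k) Y * ∏ m ∈ T.tree k, wt T π ρ q m Y))
      = ∏ k ∈ T.siblings n c, treeMass T π ρ q k (u k) := by
    rw [avg_prod (A := fun k => (T.tree k : Set (Fin N)))]
    · rfl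
    · exact fun k _ => dependsOn_tree T π ρ q k (u k)
    · intro k hk l hl hne
      rw [Finset.disjoint_coe]
      exact disjoint_tree T ((mem_siblings T).1 hk).1 ((mem_siblings T).1 hl).1 hne
  rw [avg_const_mul, avg_mul (A := {n}) (dependsOn_ind n y rfl)
    (dependsOn_mul (dependsOn_mono hpre Set.subset_union_left)
      (dependsOn_mono hsib Set.subset_union_right)), avg_ind, avg_mul hpre hsib hdis, hprod, preMass]
  · ring
  · rw [Set.disjoint_singleton_left]
    simp only [Set.mem_union, Set.mem_insert_iff, Set.mem_iUnion, Finset.mem_coe, mem_pre,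
      mem_siblings, not_or, not_exists, not_not]
    refine ⟨⟨?_, parent_mem_tree T hn (self_mem_tree T c)⟩, ?_⟩
    · rintro rfl
      exact not_mem_tree_parent T hn (self_mem_tree T n)
    · rintro k ⟨hk, hkn⟩ hnk
      exact Finset.disjoint_left.1 (disjoint_tree T hn hk hkn.symm) (self_mem_tree T n) hnk

/-- Given the label of `n`, the weights on `tree n` and on `pre n` are independent; the two blocks
may use different feature likelihoods. -/
lemma avg_split (q' : Fin N → Fin 2 → ℝ) (n : Fin N) (y : Fin 2) :
    avg (fun Y => ind n y Y * ((∏ m ∈ T.tree n, wt T π ρ q m Y) *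
      ∏ m ∈ T.pre n, wt T π ρ q' m Y)) = treeMass T π ρ q n y * preMass T π ρ q' n y := by
  -- On the event `Y n = y` the second block equals `g`, which no longer reads the label of `n`.
  let g : (Fin N → Fin 2) → ℝ := fun Y => ∏ m ∈ T.pre n, wt T π ρ q' m (Function.update Y n y)
  have hg : DependsOn g (T.pre n : Set (Fin N)) := by
    intro Y Z h
    refine dependsOn_pre T π ρ q' n fun i hi => ?_
    by_cases hin : i = n
    · subst hin; simp
    · simp only [Function.update_of_ne hin]
      exact h i (hi.resolve_left hin)
  have hup : ∀ Y, ind n y Y * ∏ m ∈ T.pre n, wt T π ρ q' m Y = ind n y Y * g Y := by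
    intro Y
    rcases ind_eq_zero_or n y Y with h | h
    · simp [h]
    · simp only [g, ← h, Function.update_eq_self]
  have h1 : preMass T π ρ q' n y = avg g := by
    rw [preMass, funext hup, avg_mul (A := {n}) (dependsOn_ind n y rfl) hg, avg_ind]
    · ring
    · simp [mem_pre, self_mem_tree]
  rw [h1, treeMass, ← avg_mul (dependsOn_tree T π ρ q n y) hg]
  · congr 1
    funext Y
    linear_combination (∏ m ∈ T.tree n, wt T π ρ q m Y) * hup Y
  · rw [Set.disjoint_left]
    intro m hm
    simpa [mem_pre] using hm

/-! ### Normalization of the class probabilities -/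

lemma sum_transProb {z : ℕ} (hz : z = 0 ∨ z = 1) :
    ∑ y : Fin 2, transProb ρ (y : ℕ) z = 1 := by
  rcases hz with rfl | rfl <;> simp [transProb]

lemma prod_label (S : Finset (Fin N)) (u : Fin N → Fin 2) :
    ∏ k ∈ S, (u k : ℕ) = 0 ∨ ∏ k ∈ S, (u k : ℕ) = 1 := by
  have : ∏ k ∈ S, (u k : ℕ) ≤ 1 := Finset.prod_le_one' fun k _ => by omega
  omega

lemma sum_loc (n : Fin N) {z : ℕ} (hz : z = 0 ∨ z = 1) : ∑ y, loc T π ρ n y z = 1 := by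
  by_cases h : T.IsLeaf n
  · simp [loc, h, leafPrior]
  · simpa [loc, h] using sum_transProb ρ hz

lemma sum_treeMass_one (n : Fin N) : ∑ y, treeMass T π ρ (fun _ _ => 1) n y = 1 := by
  induction n using tree_induction T with
  | h n ih =>
    simp only [treeMass_rec T π ρ _ n, one_mul]
    rw [Finset.sum_comm]
    simp only [← Finset.sum_mul, sum_loc T π ρ n (prod_label _ _), one_mul]
    rw [sum_assignments_prod]
    exact Finset.prod_eq_one ih

lemma preMass_one (n : Fin N) : ∀ y, preMass T π ρ (fun _ _ => 1) n y = 1 := by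
  induction n using root_induction T with
  | h0 => exact preMass_root T π ρ _
  | h n c hc ih =>
    intro y
    rw [preMass_rec T π ρ _ hc, Finset.sum_comm]
    have hz : ∀ u : Fin N → Fin 2, (y : ℕ) * ∏ k ∈ T.siblings n c, (u k : ℕ) = 0 ∨
        (y : ℕ) * ∏ k ∈ T.siblings n c, (u k : ℕ) = 1 := fun u => by
      rcases prod_label (T.siblings n c) u with h | h <;> rw [h] <;> omega
    simp only [ih, one_mul, ← Finset.sum_mul, sum_transProb ρ (hz _)]
    rw [sum_assignments_prod]
    exact Finset.prod_eq_one fun k _ => sum_treeMass_one T π ρ k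

/-- A marginal over `S ⊆ pre n` that fixes the label of `n` factors through the two masses. -/
lemma marginal_eq (S : Finset (Fin N)) (px : Fin N → Fin 2 → ℝ) (n : Fin N) (y : Fin 2)
    (hS : S ⊆ T.pre n) :
    marginal T π ρ px S {n} (fun _ => y) = treeMass T π ρ (fun _ _ => 1) n y *
      preMass T π ρ (fun m z => if m ∈ S then px m z else 1) n y := by
  rw [← avg_split, avg, marginal, Finset.sum_filter, Finset.sum_div]
  refine Finset.sum_congr rfl fun Y _ => ?_
  by_cases h : Y n = y
  swap
  · simp [h, ind]
  have hw : (∏ m ∈ T.tree n, wt T π ρ (fun _ _ => 1) m Y) *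
      ∏ m ∈ T.pre n, wt T π ρ (fun m z => if m ∈ S then px m z else 1) m Y
      = 2 ^ N * ((∏ m ∈ S, px m (Y m)) * ∏ m, nodeFactor T π ρ Y m) := by
    have hd : (∏ m ∈ T.pre n, nodeFactor T π ρ Y m) * ∏ m ∈ T.tree n, nodeFactor T π ρ Y m
        = ∏ m, nodeFactor T π ρ Y m := Finset.prod_sdiff (Finset.subset_univ _)
    have h2 : (2 : ℝ) ^ #(T.pre n) * 2 ^ #(T.tree n) = 2 ^ N := by
      rw [← pow_add, RevTree.pre, Finset.card_sdiff_add_card_eq_card (Finset.subset_univ _)]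
      simp
    simp only [wt, Finset.prod_mul_distrib, Finset.prod_const, Finset.prod_ite_mem,
      Finset.inter_eq_right.2 hS, one_mul]
    rw [← hd, ← h2]
    ring
  simp [h, ind, hw]

end HMT

/-- in a hidden Markov tree, the backward incoming message satisfies
`g_n^i(y_n) · P(y_n) = P(x_{pre(n)}, y_n)` for every node `n` and label `y_n`,
where `P(y_n) = marginal ∅ {n}` is the label marginal of node `n`. -/
theorem backward_incoming_message_eq_marginal
{N : ℕ} (T : RevTree N) (π ρ : ℝ)
    (hπ : π ∈ Set.Ioo (0 : ℝ) 1) (hρ : ρ ∈ Set.Ioo (0 : ℝ) 1)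
    (px : Fin N → Fin 2 → ℝ) (hpx : ∀ n y, 0 ≤ px n y)
(fi fo : Fin N → Fin 2 → ℝ)
    (hfiLeaf : ∀ n, T.IsLeaf n → ∀ y : Fin 2, fi n y = leafPrior π y)
    (hfiInt : ∀ n, ¬ T.IsLeaf n → ∀ y : Fin 2,
      fi n y = ∑ u ∈ assignments (T.parents n),
        transProb ρ (y : ℕ) (∏ k ∈ T.parents n, (u k : ℕ)) *
          ∏ k ∈ T.parents n, fo k (u k))
    (hfo : ∀ n y, fo n y = fi n y * px n y)
(gi go : Fin N → Fin 2 → ℝ)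
    (hgiRoot : ∀ y : Fin 2, gi T.root y = 1)
    (hgiInt : ∀ n c, T.child n = some c → ∀ y : Fin 2,
      gi n y = ∑ yc : Fin 2, ∑ u ∈ assignments (T.siblings n c),
        go c yc * transProb ρ (yc : ℕ) ((y : ℕ) * ∏ k ∈ T.siblings n c, (u k : ℕ)) *
          ∏ k ∈ T.siblings n c, fo k (u k))
    (hgo : ∀ n y, go n y = gi n y * px n y) :
    ∀ (n : Fin N) (y : Fin 2),
      gi n y * marginal T π ρ px ∅ {n} (fun _ => y) =
        marginal T π ρ px (T.pre n) {n} (fun _ => y) := by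
  have hfo' : ∀ n y, fo n y = HMT.treeMass T π ρ px n y := by
    intro n
    induction n using HMT.tree_induction T with
    | h n ih =>
      intro y
      rw [hfo, HMT.treeMass_rec, mul_comm]
      congr 1
      by_cases hl : T.IsLeaf n
      · have hp : T.parents n = ∅ := hl
        have h1 := HMT.sum_assignments_prod (∅ : Finset (Fin N)) (fun _ _ => 1)
        simp only [Finset.prod_empty] at h1
        rw [hfiLeaf n hl, hp]
        simp only [HMT.loc, hl, if_true, Finset.prod_empty]
        rw [← Finset.mul_sum, h1, mul_one]
      · rw [hfiInt n hl]
        refine Finset.sum_congr rfl fun u _ => ?_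
        rw [HMT.loc, if_neg hl, Finset.prod_congr rfl fun k hk => ih k hk (u k)]
  have hgi' : ∀ n y, gi n y = HMT.preMass T π ρ px n y := by
    intro n
    induction n using HMT.root_induction T with
    | h0 => exact fun y => by rw [hgiRoot, HMT.preMass_root]
    | h n c hc ih =>
      intro y
      rw [hgiInt n c hc, HMT.preMass_rec T π ρ px hc]
      simp only [hgo, ih, hfo']
  intro n y
  have hpre : HMT.preMass T π ρ (fun m z => if m ∈ T.pre n then px m z else 1) n y
      = HMT.preMass T π ρ px n y := by
    simp only [HMT.preMass]
    congr 2
    funext Y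
    congr 1
    exact Finset.prod_congr rfl fun m hm => by simp [HMT.wt, hm]
  rw [HMT.marginal_eq T π ρ ∅ px n y (Finset.empty_subset _),
    HMT.marginal_eq T π ρ (T.pre n) px n y subset_rfl, hpre, hgi']
  simp only [Finset.notMem_empty, if_false, HMT.preMass_one]
  ring
end
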